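/- Fix a finite index set ι with |ι| = n, partitioned into m nonempty blocks b₁,…,b_m, and let A be a positive semidefinite Hermitian complex matrix indexed by ι×ι, with block-diagonal pinching A'. Then for every integer k with 1 ≤ k ≤ n and every positive semidefinite Hermitian matrix B indexed by ι×ι, (d/dt)|_{t=0} σ_k(A + tB) ≤ 2^{(k−1)(m−1)} · (d/dt)|_{t=0} σ_k(A' + tB); equivalently, T_{k−1}(A) ≤ 2^{(k−1)(m−1)} T_{k−1}(A') in the Loewner order, where T_{k−1}(A) is the Hermitian matrix of partial derivatives of σ_k at A. (Lemma 6.3 (3), inequality (6.15).) -/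

import Mathlib

open Matrix ComplexOrder

/-- `esymm A k` is the `k`-th elementary symmetric function of the eigenvalues of the
Hermitian matrix `A`, computed as the (real part of the) sum of all `k × k` principal
minors of `A`. -/
noncomputable def esymm {ι : Type*} [Fintype ι] [DecidableEq ι]
    (A : Matrix ι ι ℂ) (k : ℕ) : ℝ :=
  (∑ S ∈ Finset.powersetCard k (Finset.univ : Finset ι),
    (A.submatrix (fun i : {x : ι // x ∈ S} => (i : ι))
      (fun i : {x : ι // x ∈ S} => (i : ι))).det).re

/-- Adding a positive semidefinite matrix to the identity does not decrease its determinant. -/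
theorem Matrix.PosSemidef.one_le_det_one_add {κ : Type*} [Fintype κ] [DecidableEq κ]
    {P : Matrix κ κ ℂ} (hP : P.PosSemidef) : 1 ≤ (1 + P).det := by
  have hdet : (1 + P).det =
      (1 + diagonal (RCLike.ofReal ∘ hP.isHermitian.eigenvalues) : Matrix κ κ ℂ).det := by
    conv_lhs => rw [hP.isHermitian.spectral_theorem, Unitary.conjStarAlgAut_apply]
    rw [mul_assoc, det_one_add_mul_comm, mul_assoc, Unitary.coe_star_mul_self, mul_one]
  rw [hdet, ← diagonal_one, diagonal_add, det_diagonal]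
  have hreal : (1 : ℝ) ≤ ∏ i, (1 + hP.isHermitian.eigenvalues i) :=
    Finset.one_le_prod fun i _ => le_add_of_nonneg_right (hP.eigenvalues_nonneg i)
  simpa using (Complex.real_le_real.mpr hreal)

/-- The determinant is monotone on positive semidefinite matrices in the Loewner order. -/
theorem Matrix.PosSemidef.det_le_det_add {κ : Type*} [Fintype κ] [DecidableEq κ]
    {A C : Matrix κ κ ℂ} (hA : A.PosSemidef) (hC : C.PosSemidef) : A.det ≤ (A + C).det := by
  by_cases h0 : A.det = 0
  · rw [h0]
    exact (hA.add hC).det_nonneg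
  obtain ⟨M, rfl⟩ : ∃ M : Matrix κ κ ℂ, C = Mᴴ * M := by
    open scoped MatrixOrder in
    exact CStarAlgebra.nonneg_iff_eq_star_mul_self.mp hC.nonneg
  have hfac : A + Mᴴ * M = A * (1 + A⁻¹ * Mᴴ * M) := by
    rw [mul_add, mul_one, ← mul_assoc, ← mul_assoc, mul_nonsing_inv _ (Ne.isUnit h0), one_mul]
  rw [hfac, det_mul, det_one_add_mul_comm, ← mul_assoc]
  exact le_mul_of_one_le_right hA.det_nonneg
    (hA.inv.mul_mul_conjTranspose_same M).one_le_det_one_add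

/-- A diagonal entry of the adjugate is the complementary principal minor. -/
theorem Matrix.adjugate_apply_self {κ R : Type*} [Fintype κ] [DecidableEq κ] [CommRing R]
    (M : Matrix κ κ R) (i : κ) :
    M.adjugate i i =
      (M.submatrix (fun a : {a // a ≠ i} => (a : κ)) (fun a : {a // a ≠ i} => (a : κ))).det := by
  rw [adjugate_apply, twoBlockTriangular_det' _ (fun a => a = i)]
  · have h1 : ∀ _ : Fintype {a // a = i},
        (toSquareBlockProp (M.updateRow i (Pi.single i 1)) (fun a => a = i)).det = 1 := by
      intro _
      rw [det_eq_elem_of_subsingleton _ (⟨i, rfl⟩ : {a // a = i})]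
      simp [toSquareBlockProp]
    rw [h1, one_mul]
    congr 1
    ext a b
    simp [toSquareBlockProp, updateRow_ne a.2]
  · rintro a rfl b hb
    simp [hb]

theorem Matrix.PosSemidef.adjugate_apply_self_le {κ : Type*} [Fintype κ] [DecidableEq κ]
    {A C : Matrix κ κ ℂ} (hA : A.PosSemidef) (hC : C.PosSemidef) (i : κ) :
    A.adjugate i i ≤ (A + C).adjugate i i := by
  rw [adjugate_apply_self, adjugate_apply_self]
  exact (hA.submatrix _).det_le_det_add (hC.submatrix _)

/-- Conjugation by a unitary matrix commutes with taking the adjugate. -/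
theorem Matrix.adjugate_star_mul_mul_unitary {κ : Type*} [Fintype κ] [DecidableEq κ]
    (A : Matrix κ κ ℂ) (U : unitaryGroup κ ℂ) :
    (star (U : Matrix κ κ ℂ) * A * U).adjugate = star (U : Matrix κ κ ℂ) * A.adjugate * U := by
  have h1 : (U : Matrix κ κ ℂ) * star (U : Matrix κ κ ℂ) = 1 := Unitary.coe_mul_star_self U
  have h2 : star (U : Matrix κ κ ℂ) * (U : Matrix κ κ ℂ) = 1 := Unitary.coe_star_mul_self U
  have hU : (U : Matrix κ κ ℂ).adjugate = (U : Matrix κ κ ℂ).det • star (U : Matrix κ κ ℂ) := by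
    rw [← mul_one (adjugate _), ← h1, ← mul_assoc, adjugate_mul, smul_mul, one_mul]
  have hU' : (star (U : Matrix κ κ ℂ)).adjugate =
      (star (U : Matrix κ κ ℂ)).det • (U : Matrix κ κ ℂ) := by
    rw [← mul_one (adjugate _), ← h2, ← mul_assoc, adjugate_mul, smul_mul, one_mul]
  have hdet : (star (U : Matrix κ κ ℂ)).det * (U : Matrix κ κ ℂ).det = 1 := by
    rw [← det_mul, h2, det_one]
  rw [adjugate_mul_distrib, adjugate_mul_distrib, hU, hU']
  simp only [Matrix.mul_smul, Matrix.smul_mul, smul_smul, hdet, one_smul, mul_assoc]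

/-- The adjugate is Loewner-monotone on positive semidefinite matrices, tested against a
positive semidefinite matrix `B`. -/
theorem Matrix.PosSemidef.trace_adjugate_mul_le {κ : Type*} [Fintype κ] [DecidableEq κ]
    {A C B : Matrix κ κ ℂ} (hA : A.PosSemidef) (hC : C.PosSemidef) (hB : B.PosSemidef) :
    (A.adjugate * B).trace ≤ ((A + C).adjugate * B).trace := by
  set U := hB.isHermitian.eigenvectorUnitary with hUdef
  have key : ∀ M : Matrix κ κ ℂ, (M.adjugate * B).trace =
      ∑ i, (star (U : Matrix κ κ ℂ) * M * U).adjugate i i * hB.isHermitian.eigenvalues i := by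
    intro M
    rw [adjugate_star_mul_mul_unitary]
    conv_lhs => rw [hB.isHermitian.spectral_theorem, Unitary.conjStarAlgAut_apply]
    rw [← mul_assoc, ← mul_assoc, trace_mul_comm, ← mul_assoc, ← mul_assoc]
    simp [trace, mul_diagonal, hUdef]
  rw [key, key]
  refine Finset.sum_le_sum fun i _ => mul_le_mul_of_nonneg_right ?_ ?_
  · rw [mul_add, add_mul]
    exact (hA.conjTranspose_mul_mul_same _).adjugate_apply_self_le
      (hC.conjTranspose_mul_mul_same _) i
  · exact_mod_cast hB.eigenvalues_nonneg i

/-- **Jacobi's formula** along a line. -/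
theorem Matrix.hasDerivAt_det_add_smul {κ : Type*} [Fintype κ] [DecidableEq κ]
    (A B : Matrix κ κ ℂ) :
    HasDerivAt (fun z : ℂ => (A + z • B).det) (A.adjugate * B).trace 0 := by
  let f : ContinuousMultilinearMap ℂ (fun _ : κ => κ → ℂ) ℂ :=
    { (detRowAlternating : (κ → ℂ) [⋀^κ]→ₗ[ℂ] ℂ).toMultilinearMap with
      cont := Continuous.matrix_det continuous_id }
  have hline : HasDerivAt (fun z : ℂ => (fun i => A i + z • B i : κ → κ → ℂ)) (fun i => B i) 0 := by
    rw [hasDerivAt_pi]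
    intro i
    simpa using ((hasDerivAt_id (0 : ℂ)).smul_const (B i)).const_add (A i)
  have h := (f.hasFDerivAt (fun i => A i + (0 : ℂ) • B i)).comp_hasDerivAt (0 : ℂ) hline
  refine h.congr_deriv ?_
  symm
  rw [ContinuousMultilinearMap.linearDeriv_apply, trace_mul_comm]
  simp only [zero_smul, add_zero]
  refine Finset.sum_congr rfl fun i _ => ?_
  rw [diag_apply, mul_apply]
  have h2 := congrFun (cramer_eq_adjugate_mulVec Aᵀ (B i)) i
  rw [cramer_transpose_apply, ← adjugate_transpose] at h2
  change _ = (A.updateRow i (B i)).det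
  rw [h2]
  simp [mulVec, dotProduct, mul_comm]

/-- A positive semidefinite matrix is Loewner-bounded by the number of blocks times its
block-diagonal pinching. -/
theorem Matrix.PosSemidef.smul_pinching_sub {κ β : Type*} [Fintype κ] [DecidableEq κ] [Fintype β]
    [DecidableEq β] {A : Matrix κ κ ℂ} (hA : A.PosSemidef) (blk : κ → β) :
    ((Fintype.card β : ℂ) • (Matrix.of fun i j => if blk i = blk j then A i j else 0)
      - A).PosSemidef := by
  let D : β → β → Matrix κ κ ℂ := fun p q =>
    diagonal fun i => (if blk i = p then 1 else 0) - (if blk i = q then 1 else 0)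
  have hsum : (∑ p, ∑ q, (D p q)ᴴ * A * D p q).PosSemidef :=
    posSemidef_sum _ fun p _ => posSemidef_sum _ fun q _ => hA.conjTranspose_mul_mul_same _
  have hhalf : (0 : ℂ) ≤ 2⁻¹ := by positivity
  convert hsum.smul hhalf using 1
  ext i j
  simp only [sub_apply, smul_apply, of_apply, Matrix.sum_apply, smul_eq_mul]
  have hterm : ∀ p q, ((D p q)ᴴ * A * D p q) i j =
      ((if blk i = p then 1 else 0) - (if blk i = q then 1 else 0)) * A i j *
        ((if blk j = p then 1 else 0) - (if blk j = q then 1 else 0)) := by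
    intro p q
    simp only [D, diagonal_conjTranspose, mul_diagonal, diagonal_mul, Pi.star_apply]
    congr 2
    split_ifs <;> simp
  simp only [hterm]
  simp only [sub_mul, mul_sub, Finset.sum_sub_distrib, ite_mul, mul_ite, one_mul, mul_one,
    zero_mul, mul_zero, Finset.sum_ite_eq, Finset.mem_univ, if_true, Finset.sum_const,
    Finset.card_univ, nsmul_eq_mul]
  by_cases h : blk i = blk j
  · simp [h]
    ring
  · simp [h]
    ring

/-- The derivative of `esymm` along a line, as a sum of adjugate traces. -/
theorem hasDerivAt_esymm_add_smul {ι : Type*} [Fintype ι] [DecidableEq ι]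
    (A B : Matrix ι ι ℂ) (k : ℕ) :
    HasDerivAt (fun t : ℝ => esymm (A + (t : ℂ) • B) k)
      (∑ S ∈ Finset.powersetCard k (Finset.univ : Finset ι),
        ((A.submatrix (Subtype.val : {x : ι // x ∈ S} → ι) Subtype.val).adjugate *
          B.submatrix (Subtype.val : {x : ι // x ∈ S} → ι) Subtype.val).trace).re 0 := by
  refine HasDerivAt.real_of_complex (e := fun z : ℂ =>
    ∑ S ∈ Finset.powersetCard k (Finset.univ : Finset ι),
      ((A + z • B).submatrix (fun i : {x : ι // x ∈ S} => (i : ι))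
        (fun i : {x : ι // x ∈ S} => (i : ι))).det) ?_
  exact HasDerivAt.fun_sum fun S _ => hasDerivAt_det_add_smul
    (A.submatrix (Subtype.val : {x : ι // x ∈ S} → ι) Subtype.val)
    (B.submatrix (Subtype.val : {x : ι // x ∈ S} → ι) Subtype.val)

/-- Lemma 6.3 (3), inequality (6.15): for a positive semidefinite Hermitian matrix `A`
indexed by `ι` (of cardinality `n`) partitioned into `m` nonempty blocks, with
block-diagonal pinching `A'`, for every `1 ≤ k ≤ n` and every positive semidefinite `B`,
`(d/dt)|₀ σ_k(A + tB) ≤ 2^((k-1)(m-1)) · (d/dt)|₀ σ_k(A' + tB)`, i.e.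
`T_{k-1}(A) ≤ 2^((k-1)(m-1)) T_{k-1}(A')` in the Loewner order. -/
theorem stmt11 (ι : Type) [Fintype ι] [DecidableEq ι] (n m : ℕ)
    (hcard : Fintype.card ι = n)
    (blk : ι → Fin m) (hblk : Function.Surjective blk)
    (A : Matrix ι ι ℂ) (hA : A.PosSemidef)
    (k : ℕ) (hk1 : 1 ≤ k) (hk : k ≤ n)
    (B : Matrix ι ι ℂ) (hB : B.PosSemidef) :
    deriv (fun t : ℝ => esymm (A + (t : ℂ) • B) k) 0
      ≤ (2 : ℝ) ^ ((k - 1) * (m - 1)) *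
        deriv (fun t : ℝ =>
          esymm ((Matrix.of fun i j => if blk i = blk j then A i j else 0)
            + (t : ℂ) • B) k) 0 := by
  set A' : Matrix ι ι ℂ := Matrix.of fun i j => if blk i = blk j then A i j else 0
  rw [(hasDerivAt_esymm_add_smul A B k).deriv, (hasDerivAt_esymm_add_smul A' B k).deriv]
  have hι : Nonempty ι := Fintype.card_pos_iff.mp (by omega)
  have hm : 1 ≤ m := (blk hι.some).pos
  have hm2 : m ≤ 2 ^ (m - 1) := by
    have := Nat.lt_two_pow_self (n := m - 1)
    omega
  have hpinch : ((m : ℂ) • A' - A).PosSemidef := by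
    have h := hA.smul_pinching_sub blk
    rwa [Fintype.card_fin] at h
  have hA'psd : A'.PosSemidef := by
    have hm0 : (m : ℂ) ≠ 0 := by exact_mod_cast (by omega : m ≠ 0)
    have h := (hpinch.add hA).smul (a := (m : ℂ)⁻¹) (by positivity)
    rwa [sub_add_cancel, smul_smul, inv_mul_cancel₀ hm0, one_smul] at h
  obtain ⟨C, hC, hAC⟩ : ∃ C : Matrix ι ι ℂ, C.PosSemidef ∧ A + C = (2 : ℂ) ^ (m - 1) • A' := by
    refine ⟨((2 : ℂ) ^ (m - 1) - m) • A' + ((m : ℂ) • A' - A), (hA'psd.smul ?_).add hpinch, ?_⟩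
    · rw [sub_nonneg]
      exact_mod_cast hm2
    · rw [sub_smul]
      abel
  have hle : (∑ S ∈ Finset.powersetCard k (Finset.univ : Finset ι),
        ((A.submatrix (Subtype.val : {x : ι // x ∈ S} → ι) Subtype.val).adjugate *
          B.submatrix (Subtype.val : {x : ι // x ∈ S} → ι) Subtype.val).trace) ≤
      ((2 : ℝ) ^ ((k - 1) * (m - 1)) : ℝ) *
        ∑ S ∈ Finset.powersetCard k (Finset.univ : Finset ι),
        ((A'.submatrix (Subtype.val : {x : ι // x ∈ S} → ι) Subtype.val).adjugate *
          B.submatrix (Subtype.val : {x : ι // x ∈ S} → ι) Subtype.val).trace := by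
    rw [Finset.mul_sum]
    refine Finset.sum_le_sum fun S hS => ?_
    have hScard : Fintype.card {x : ι // x ∈ S} = k := by
      rw [Fintype.card_coe, (Finset.mem_powersetCard.mp hS).2]
    refine ((hA.submatrix _).trace_adjugate_mul_le (hC.submatrix Subtype.val)
      (hB.submatrix _)).trans_eq ?_
    have hsub : ∀ e : {x : ι // x ∈ S} → ι, A.submatrix e e + C.submatrix e e =
        (2 : ℂ) ^ (m - 1) • A'.submatrix e e :=
      fun e => congrArg (fun M : Matrix ι ι ℂ => M.submatrix e e) hAC
    rw [hsub, adjugate_smul, hScard, Matrix.smul_mul, trace_smul, ← pow_mul, mul_comm (m - 1)]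
    simp
  have h := (Complex.le_def.mp hle).1
  rwa [Complex.re_ofReal_mul] at h
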